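/- The position vector of M satisfies Δ^{III} x = ∇^{III}(2H/K, n) − (2H/K) n on U. -/

import Mathlib

open Matrix

noncomputable section

/-- The parameter domain `ℝ²`. -/
abbrev Param : Type := Fin 2 → ℝ

/-- Vectors in Euclidean 3-space. -/
abbrev Vec3 : Type := Fin 3 → ℝ

/-- Partial derivative of a vector-valued function in the `i`-th coordinate direction. -/
noncomputable def pd (i : Fin 2) (f : Param → Vec3) (u : Param) : Vec3 :=
  fderiv ℝ f u (Pi.single i 1)

/-- Partial derivative of a scalar function in the `i`-th coordinate direction. -/
noncomputable def pds (i : Fin 2) (f : Param → ℝ) (u : Param) : ℝ :=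
  fderiv ℝ f u (Pi.single i 1)

/-- The Euclidean inner product on `ℝ³`. -/
def dot3 (a b : Vec3) : ℝ := ∑ k, a k * b k

/-- The Euclidean norm on `ℝ³`. -/
noncomputable def norm3 (a : Vec3) : ℝ := Real.sqrt (dot3 a a)

/-- The Gauss map `n = (x_{/1} × x_{/2}) / ‖x_{/1} × x_{/2}‖`. -/
noncomputable def gaussMap (x : Param → Vec3) (u : Param) : Vec3 :=
  (norm3 (crossProduct (pd 0 x u) (pd 1 x u)))⁻¹ • crossProduct (pd 0 x u) (pd 1 x u)

/-- Components `g_{ij}` of the first fundamental form. -/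
noncomputable def fformI (x : Param → Vec3) (u : Param) : Matrix (Fin 2) (Fin 2) ℝ :=
  Matrix.of fun i j => dot3 (pd i x u) (pd j x u)

/-- Components `b_{ij} = ⟨∂²x/∂u^i∂u^j, n⟩` of the second fundamental form. -/
noncomputable def fformII (x : Param → Vec3) (u : Param) : Matrix (Fin 2) (Fin 2) ℝ :=
  Matrix.of fun i j => dot3 (pd i (pd j x) u) (gaussMap x u)

/-- Components `e_{ij} = ⟨n_{/i}, n_{/j}⟩` of the third fundamental form. -/
noncomputable def fformIII (x : Param → Vec3) (u : Param) : Matrix (Fin 2) (Fin 2) ℝ :=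
  Matrix.of fun i j => dot3 (pd i (gaussMap x) u) (pd j (gaussMap x) u)

/-- The Gauss curvature `K = det(b_{ij}) / det(g_{ij})`. -/
noncomputable def gaussCurv (x : Param → Vec3) (u : Param) : ℝ :=
  (fformII x u).det / (fformI x u).det

/-- The mean curvature `H = (1/2) g^{ij} b_{ij}`. -/
noncomputable def meanCurv (x : Param → Vec3) (u : Param) : ℝ :=
  (1 / 2) * ∑ i, ∑ j, (fformI x u)⁻¹ i j * fformII x u i j

/-- First Beltrami operator `∇^J(φ, ψ) = a^{ij} φ_{/i} ψ_{/j}` with respect to the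
fundamental form with component matrix `a`, for scalar `φ` and `ℝ³`-valued `ψ`. -/
noncomputable def beltrami1 (a : Param → Matrix (Fin 2) (Fin 2) ℝ)
    (φ : Param → ℝ) (ψ : Param → Vec3) (u : Param) : Vec3 :=
  ∑ i, ∑ j, ((a u)⁻¹ i j * pds i φ u) • pd j ψ u

/-- Second Beltrami operator
`Δ^J f = −(1/√|det a|) ∂_i (√|det a| a^{ij} ∂_j f)` with respect to the fundamental
form with component matrix `a`, acting componentwise on `ℝ³`-valued functions. -/
noncomputable def beltrami2 (a : Param → Matrix (Fin 2) (Fin 2) ℝ)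
    (f : Param → Vec3) (u : Param) : Vec3 :=
  -((Real.sqrt |(a u).det|)⁻¹ •
    ∑ i, ∑ j, pd i (fun v => (Real.sqrt |(a v).det| * (a v)⁻¹ i j) • pd j f v) u)

/-- `x` is an immersion on `U`: the partial derivatives are linearly independent. -/
def Immersed (x : Param → Vec3) (U : Set Param) : Prop :=
  ∀ u ∈ U, LinearIndependent ℝ ![pd 0 x u, pd 1 x u]

/-- `f` is nonconstant on `U`. -/
def NonconstOn (f : Param → Vec3) (U : Set Param) : Prop :=
  ¬ ∃ v : Vec3, ∀ u ∈ U, f u = v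

lemma pd_apply' {f : Param → Vec3} {u : Param} (hf : DifferentiableAt ℝ f u) (i : Fin 2) (k : Fin 3) :
    pd i f u k = pds i (fun v => f v k) u := by
  unfold pd pds
  rw [fderiv_apply hf k]
  rfl

lemma comp_diff {f : Param → Vec3} {u : Param} (hf : DifferentiableAt ℝ f u) (k : Fin 3) :
    DifferentiableAt ℝ (fun v => f v k) u := differentiableAt_pi.1 hf k

lemma pds_mul' {f g : Param → ℝ} {u : Param} (hf : DifferentiableAt ℝ f u)
    (hg : DifferentiableAt ℝ g u) (i : Fin 2) :
    pds i (fun v => f v * g v) u = f u * pds i g u + pds i f u * g u := by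
  unfold pds
  rw [fderiv_fun_mul hf hg]
  simp [mul_comm]

lemma pds_add' {f g : Param → ℝ} {u : Param} (hf : DifferentiableAt ℝ f u)
    (hg : DifferentiableAt ℝ g u) (i : Fin 2) :
    pds i (fun v => f v + g v) u = pds i f u + pds i g u := by
  unfold pds
  rw [fderiv_fun_add hf hg]
  simp

lemma pds_sub' {f g : Param → ℝ} {u : Param} (hf : DifferentiableAt ℝ f u)
    (hg : DifferentiableAt ℝ g u) (i : Fin 2) :
    pds i (fun v => f v - g v) u = pds i f u - pds i g u := by
  unfold pds
  rw [fderiv_fun_sub hf hg]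
  simp

lemma pd_add' {f g : Param → Vec3} {u : Param} (hf : DifferentiableAt ℝ f u)
    (hg : DifferentiableAt ℝ g u) (i : Fin 2) :
    pd i (fun v => f v + g v) u = pd i f u + pd i g u := by
  unfold pd
  rw [fderiv_fun_add hf hg]
  simp

lemma pd_smul' {c : Param → ℝ} {f : Param → Vec3} {u : Param} (hc : DifferentiableAt ℝ c u)
    (hf : DifferentiableAt ℝ f u) (i : Fin 2) :
    pd i (fun v => c v • f v) u = c u • pd i f u + pds i c u • f u := by
  unfold pd pds
  rw [fderiv_fun_smul hc hf]
  simp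

lemma pd_csmul' (c : ℝ) {f : Param → Vec3} {u : Param}
    (hf : DifferentiableAt ℝ f u) (i : Fin 2) :
    pd i (fun v => c • f v) u = c • pd i f u := by
  unfold pd
  rw [fderiv_fun_const_smul hf]
  simp

lemma cross_diff {f g : Param → Vec3} {u : Param} (hf : DifferentiableAt ℝ f u)
    (hg : DifferentiableAt ℝ g u) :
    DifferentiableAt ℝ (fun v => crossProduct (f v) (g v)) u := by
  have h1 := comp_diff hf
  have h2 := comp_diff hg
  rw [differentiableAt_pi]
  intro k
  fin_cases k <;> simp [cross_apply] <;>
    exact ((h1 _).mul (h2 _)).sub ((h1 _).mul (h2 _))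

lemma cross_smooth {f g : Param → Vec3} {U : Set Param} (hf : ContDiffOn ℝ (⊤ : ℕ∞) f U)
    (hg : ContDiffOn ℝ (⊤ : ℕ∞) g U) :
    ContDiffOn ℝ (⊤ : ℕ∞) (fun v => crossProduct (f v) (g v)) U := by
  have h1 := contDiffOn_pi.1 hf
  have h2 := contDiffOn_pi.1 hg
  rw [contDiffOn_pi]
  intro k
  fin_cases k <;> simp [cross_apply] <;>
    exact ((h1 _).mul (h2 _)).sub ((h1 _).mul (h2 _))

lemma dot_smooth {f g : Param → Vec3} {U : Set Param} (hf : ContDiffOn ℝ (⊤ : ℕ∞) f U)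
    (hg : ContDiffOn ℝ (⊤ : ℕ∞) g U) :
    ContDiffOn ℝ (⊤ : ℕ∞) (fun v => dot3 (f v) (g v)) U := by
  have h1 := contDiffOn_pi.1 hf
  have h2 := contDiffOn_pi.1 hg
  unfold dot3
  exact ContDiffOn.sum fun k _ => (h1 k).mul (h2 k)

lemma pd_cross {f g : Param → Vec3} {u : Param} (hf : DifferentiableAt ℝ f u)
    (hg : DifferentiableAt ℝ g u) (i : Fin 2) :
    pd i (fun v => crossProduct (f v) (g v)) u =
      crossProduct (pd i f u) (g u) + crossProduct (f u) (pd i g u) := by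
  have h1 := comp_diff hf
  have h2 := comp_diff hg
  funext k
  rw [pd_apply' (cross_diff hf hg)]
  fin_cases k <;> simp [cross_apply] <;>
    rw [pds_sub' ((h1 _).fun_mul (h2 _)) ((h1 _).fun_mul (h2 _)), pds_mul' (h1 _) (h2 _),
      pds_mul' (h1 _) (h2 _), pd_apply' hf, pd_apply' hf, pd_apply' hg, pd_apply' hg] <;> ring

lemma pds_dot {f g : Param → Vec3} {u : Param} (hf : DifferentiableAt ℝ f u)
    (hg : DifferentiableAt ℝ g u) (i : Fin 2) :
    pds i (fun v => dot3 (f v) (g v)) u =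
      dot3 (pd i f u) (g u) + dot3 (f u) (pd i g u) := by
  have h1 := comp_diff hf
  have h2 := comp_diff hg
  simp only [dot3, Fin.sum_univ_three]
  rw [pds_add' (((h1 _).fun_mul (h2 _)).fun_add ((h1 _).fun_mul (h2 _))) ((h1 _).fun_mul (h2 _)),
    pds_add' ((h1 _).fun_mul (h2 _)) ((h1 _).fun_mul (h2 _))]
  simp only [pds_mul' (h1 _) (h2 _), pd_apply' hf, pd_apply' hg]
  ring

lemma pd_congr {f g : Param → Vec3} {u : Param} (h : f =ᶠ[nhds u] g) (i : Fin 2) :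
    pd i f u = pd i g u := by
  unfold pd; rw [h.fderiv_eq]

lemma pds_congr {f g : Param → ℝ} {u : Param} (h : f =ᶠ[nhds u] g) (i : Fin 2) :
    pds i f u = pds i g u := by
  unfold pds; rw [h.fderiv_eq]

lemma pds_const (c : ℝ) (u : Param) (i : Fin 2) : pds i (fun _ => c) u = 0 := by
  unfold pds; simp

lemma pd_smooth {f : Param → Vec3} {U : Set Param} (hU : IsOpen U)
    (hf : ContDiffOn ℝ (⊤ : ℕ∞) f U) (i : Fin 2) : ContDiffOn ℝ (⊤ : ℕ∞) (pd i f) U :=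
  (hf.fderiv_of_isOpen hU (m := (⊤ : ℕ∞)) (by simp)).clm_apply contDiffOn_const

lemma pd_symm {f : Param → Vec3} {U : Set Param} (hU : IsOpen U)
    (hf : ContDiffOn ℝ (⊤ : ℕ∞) f U) {u : Param} (hu : u ∈ U) (i j : Fin 2) :
    pd i (pd j f) u = pd j (pd i f) u := by
  have hat := hf.contDiffAt (hU.mem_nhds hu)
  have hs : IsSymmSndFDerivAt ℝ f u := hat.isSymmSndFDerivAt (by simp; exact WithTop.coe_le_coe.2 (le_top : (2:ℕ∞) ≤ ⊤))
  have hd : DifferentiableAt ℝ (fderiv ℝ f) u :=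
    (hat.fderiv_right (m := (⊤ : ℕ∞)) (by simp)).differentiableAt (by simp)
  have key : ∀ i j, pd i (pd j f) u =
      fderiv ℝ (fderiv ℝ f) u (Pi.single i 1) (Pi.single j 1) := by
    intro i j
    change fderiv ℝ (fun v => fderiv ℝ f v (Pi.single j 1)) u (Pi.single i 1) = _
    rw [fderiv_clm_apply hd (by fun_prop)]
    simp
  rw [key, key]
  exact hs _ _

/-- expansion in the basis `p, q, p × q`. -/
lemma expand (p q a : Vec3) :
    (dot3 p p * dot3 q q - dot3 p q ^ 2) • a =
      (dot3 a p * dot3 q q - dot3 a q * dot3 p q) • p +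
      (dot3 a q * dot3 p p - dot3 a p * dot3 p q) • q +
      dot3 a (crossProduct p q) • crossProduct p q := by
  funext k
  fin_cases k <;> simp [dot3, Fin.sum_univ_three, cross_apply] <;> ring

lemma lagrange (p q a b : Vec3) :
    dot3 (crossProduct p q) (crossProduct a b) = dot3 p a * dot3 q b - dot3 p b * dot3 q a := by
  simp [dot3, Fin.sum_univ_three, cross_apply]; ring

lemma dot3_add_left (a b c : Vec3) : dot3 (a + b) c = dot3 a c + dot3 b c := by
  simp [dot3, Fin.sum_univ_three]; ring
lemma dot3_add_right (a b c : Vec3) : dot3 c (a + b) = dot3 c a + dot3 c b := by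
  simp [dot3, Fin.sum_univ_three]; ring
lemma dot3_smul_left (r : ℝ) (a c : Vec3) : dot3 (r • a) c = r * dot3 a c := by
  simp [dot3, Fin.sum_univ_three]; ring
lemma dot3_smul_right (r : ℝ) (a c : Vec3) : dot3 c (r • a) = r * dot3 c a := by
  simp [dot3, Fin.sum_univ_three]; ring
lemma dot3_comm (a c : Vec3) : dot3 c a = dot3 a c := by
  simp [dot3, Fin.sum_univ_three]; ring

lemma triple (p q : Vec3) :
    crossProduct p (crossProduct p q) = dot3 p q • p - dot3 p p • q ∧
    crossProduct q (crossProduct p q) = dot3 q q • p - dot3 p q • q := by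
  constructor <;> funext k <;> fin_cases k <;>
    simp [dot3, Fin.sum_univ_three, cross_apply] <;> ring

lemma in_span (p q n a : Vec3) (N : ℝ) (hN : 0 < N) (hc : crossProduct p q = N • n)
    (hE : dot3 p p * dot3 q q - dot3 p q ^ 2 = N ^ 2) (ha : dot3 a n = 0) :
    ∃ a1 a2 : ℝ, a = a1 • p + a2 • q := by
  have h := expand p q a
  rw [hE, hc, dot3_smul_right, ha] at h
  have hN2 : N ^ 2 ≠ 0 := by positivity
  refine ⟨(N ^ 2)⁻¹ * (dot3 a p * dot3 q q - dot3 a q * dot3 p q),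
    (N ^ 2)⁻¹ * (dot3 a q * dot3 p p - dot3 a p * dot3 p q), ?_⟩
  calc a = (N ^ 2)⁻¹ • (N ^ 2 • a) := by rw [smul_smul, inv_mul_cancel₀ hN2, one_smul]
    _ = _ := by rw [h]; module

lemma ptwise (p q n a b : Vec3) (N φ : ℝ) (hN : 0 < N) (hc : crossProduct p q = N • n)
    (hnn : dot3 n n = 1) (ha : dot3 a n = 0) (hb : dot3 b n = 0)
    (hsym : dot3 p b = dot3 q a)
    (hdet : dot3 p a * dot3 q b - dot3 p b * dot3 q a ≠ 0)
    (hφ : φ * (dot3 p a * dot3 q b - dot3 p b * dot3 q a) =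
      -(dot3 q q * dot3 p a - 2 * dot3 p q * dot3 p b + dot3 p p * dot3 q b)) :
    ∃ D : ℝ, D = dot3 (crossProduct a b) n ∧ D ≠ 0 ∧
      dot3 a a * dot3 b b - dot3 a b * dot3 b a = D ^ 2 ∧
      (dot3 b b / D) • p + (-dot3 a b / D) • q =
        -(φ • crossProduct b n + crossProduct q n) ∧
      (-dot3 b a / D) • p + (dot3 a a / D) • q =
        -(φ • crossProduct n a + crossProduct n p) ∧
      crossProduct b n = (dot3 b b / D) • a + (-dot3 a b / D) • b ∧
      crossProduct n a = (-dot3 b a / D) • a + (dot3 a a / D) • b ∧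
      crossProduct a b = D • n ∧
      crossProduct q a + crossProduct b p = (φ * D) • n := by
  have hE : dot3 p p * dot3 q q - dot3 p q ^ 2 = N ^ 2 := by
    have := lagrange p q p q
    rw [hc, dot3_smul_left, dot3_smul_right, hnn, dot3_comm p q] at this
    linear_combination -this
  obtain ⟨a1, a2, rfl⟩ := in_span p q n a N hN hc hE ha
  obtain ⟨b1, b2, rfl⟩ := in_span p q n b N hN hc hE hb
  have hn : n = N⁻¹ • crossProduct p q := by
    rw [hc, smul_smul, inv_mul_cancel₀ hN.ne', one_smul]
  have hpn : crossProduct p n = N⁻¹ • (dot3 p q • p - dot3 p p • q) := by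
    rw [hn, map_smul, (triple p q).1]
  have hqn : crossProduct q n = N⁻¹ • (dot3 q q • p - dot3 p q • q) := by
    rw [hn, map_smul, (triple p q).2]
  have hnp : crossProduct n p = -(N⁻¹ • (dot3 p q • p - dot3 p p • q)) := by
    rw [← hpn, cross_anticomm]
  have hnq : crossProduct n q = -(N⁻¹ • (dot3 q q • p - dot3 p q • q)) := by
    rw [← hqn, cross_anticomm]
  have hqp : crossProduct q p = -(N • n) := by rw [← hc, cross_anticomm]
  have hab : crossProduct (a1 • p + a2 • q) (b1 • p + b2 • q) = ((a1 * b2 - a2 * b1) * N) • n := by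
    simp only [map_add, map_smul, LinearMap.add_apply, LinearMap.smul_apply, cross_self, hc, hqp]
    module
  simp only [dot3_add_left, dot3_add_right, dot3_smul_left, dot3_smul_right,
    dot3_comm p q] at hsym hdet hφ
  generalize hEE : dot3 p p = E at *
  generalize hFF : dot3 p q = F at *
  generalize hGG : dot3 q q = G at *
  have hδ : a1 * b2 - a2 * b1 ≠ 0 := by
    intro h
    apply hdet
    linear_combination (E * G - F ^ 2) * h
  have hNN : E * G - F ^ 2 ≠ 0 := by rw [hE]; positivity
  have hφ' : φ = -(a1 + b2) / (a1 * b2 - a2 * b1) := by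
    rw [eq_div_iff hδ]
    apply mul_left_cancel₀ hNN
    linear_combination hφ + F * hsym
  have hN0 := hN.ne'
  obtain ⟨δ, hδe⟩ : ∃ δ, a1 * b2 - a2 * b1 = δ := ⟨_, rfl⟩
  rw [hδe] at hab hδ hφ'
  refine ⟨δ * N, ?_, mul_ne_zero hδ hN0, ?_, ?_, ?_, ?_, ?_, hab, ?_⟩
  · rw [hab, dot3_smul_left, hnn, mul_one]
  · simp only [dot3_add_left, dot3_add_right, dot3_smul_left, dot3_smul_right, dot3_comm p q,
      hEE, hFF, hGG]
    rw [← hδe]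
    linear_combination (a1 * b2 - a2 * b1) ^ 2 * hE
  all_goals
    simp only [dot3_add_left, dot3_add_right, dot3_smul_left, dot3_smul_right, dot3_comm p q,
      hEE, hFF, hGG, map_add, map_smul, LinearMap.add_apply, LinearMap.smul_apply, cross_self,
      hc, hqp, hpn, hqn, hnp, hnq]
  · rw [hφ']
    match_scalars
    · field_simp
      linear_combination b1 * hsym - G * hδe
    · field_simp
      linear_combination b2 * hsym + F * hδe
  · rw [hφ']
    match_scalars
    · field_simp
      linear_combination -a1 * hsym + F * hδe
    · field_simp
      linear_combination -a2 * hsym - E * hδe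
  · match_scalars
    · field_simp
      linear_combination -(b1 * F + b2 * G) * hδe
    · field_simp
      linear_combination (b1 * E + b2 * F) * hδe
  · match_scalars
    · field_simp
      linear_combination (a1 * F + a2 * G) * hδe
    · field_simp
      linear_combination -(a1 * E + a2 * F) * hδe
  · rw [hφ']
    match_scalars <;> field_simp <;> ring

lemma matH (A B : Matrix (Fin 2) (Fin 2) ℝ) (hA : A.det ≠ 0) (hB : B.det ≠ 0) :
    (2 * (1 / 2 * ∑ i, ∑ j, A⁻¹ i j * B i j) / (B.det / A.det)) * B.det =
      A 1 1 * B 0 0 - A 0 1 * B 0 1 - A 1 0 * B 1 0 + A 0 0 * B 1 1 := by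
  have h : ∀ i j, A⁻¹ i j = A.det⁻¹ * A.adjugate i j := by
    intro i j; rw [Matrix.inv_def, Ring.inverse_eq_inv']; rfl
  simp only [h, Fin.sum_univ_two, Matrix.adjugate_fin_two]
  simp
  field_simp
  ring

lemma dot_cross_left (p q : Vec3) : dot3 p (crossProduct p q) = 0 := by
  simp [dot3, Fin.sum_univ_three, cross_apply]; ring
lemma dot_cross_right (p q : Vec3) : dot3 q (crossProduct p q) = 0 := by
  simp [dot3, Fin.sum_univ_three, cross_apply]; ring

lemma dot3_pos {a : Vec3} (ha : a ≠ 0) : 0 < dot3 a a := by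
  have h0 : 0 ≤ dot3 a a := Finset.sum_nonneg fun k _ => mul_self_nonneg _
  refine lt_of_le_of_ne h0 fun h => ha ?_
  funext k
  have := (Finset.sum_eq_zero_iff_of_nonneg fun k _ => mul_self_nonneg (a k)).1 h.symm k
    (Finset.mem_univ k)
  exact mul_self_eq_zero.1 this

lemma cross_pos {U : Set Param} {x : Param → Vec3} (himm : Immersed x U) {u : Param} (hu : u ∈ U) :
    0 < dot3 (crossProduct (pd 0 x u) (pd 1 x u)) (crossProduct (pd 0 x u) (pd 1 x u)) :=
  dot3_pos (crossProduct_ne_zero_iff_linearIndependent.2 (himm u hu))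

lemma gauss_smooth {U : Set Param} {x : Param → Vec3} (hU : IsOpen U)
    (hx : ContDiffOn ℝ (⊤ : ℕ∞) x U) (himm : Immersed x U) :
    ContDiffOn ℝ (⊤ : ℕ∞) (gaussMap x) U := by
  have hc := cross_smooth (pd_smooth hU hx 0) (pd_smooth hU hx 1)
  unfold gaussMap norm3
  refine ContDiffOn.smul (ContDiffOn.inv ((dot_smooth hc hc).sqrt ?_) ?_) hc
  · intro u hu; exact (cross_pos himm hu).ne'
  · intro u hu; exact (Real.sqrt_pos.2 (cross_pos himm hu)).ne'

lemma facts {U : Set Param} {x : Param → Vec3} (hU : IsOpen U)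
    (hx : ContDiffOn ℝ (⊤ : ℕ∞) x U) (himm : Immersed x U)
    (hpar : ∀ u ∈ U, (fformII x u).det ≠ 0) {u : Param} (hu : u ∈ U) :
    ∃ D : ℝ, D = dot3 (crossProduct (pd 0 (gaussMap x) u) (pd 1 (gaussMap x) u)) (gaussMap x u) ∧
      D ≠ 0 ∧ (fformIII x u).det = D ^ 2 ∧
      (fformIII x u 1 1 / D) • pd 0 x u + (-fformIII x u 0 1 / D) • pd 1 x u =
        -((2 * meanCurv x u / gaussCurv x u) • crossProduct (pd 1 (gaussMap x) u) (gaussMap x u)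
          + crossProduct (pd 1 x u) (gaussMap x u)) ∧
      (-fformIII x u 1 0 / D) • pd 0 x u + (fformIII x u 0 0 / D) • pd 1 x u =
        -((2 * meanCurv x u / gaussCurv x u) • crossProduct (gaussMap x u) (pd 0 (gaussMap x) u)
          + crossProduct (gaussMap x u) (pd 0 x u)) ∧
      crossProduct (pd 1 (gaussMap x) u) (gaussMap x u) =
        (fformIII x u 1 1 / D) • pd 0 (gaussMap x) u
          + (-fformIII x u 0 1 / D) • pd 1 (gaussMap x) u ∧
      crossProduct (gaussMap x u) (pd 0 (gaussMap x) u) =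
        (-fformIII x u 1 0 / D) • pd 0 (gaussMap x) u
          + (fformIII x u 0 0 / D) • pd 1 (gaussMap x) u ∧
      crossProduct (pd 0 (gaussMap x) u) (pd 1 (gaussMap x) u) = D • gaussMap x u ∧
      crossProduct (pd 1 x u) (pd 0 (gaussMap x) u) + crossProduct (pd 1 (gaussMap x) u) (pd 0 x u)
        = (2 * meanCurv x u / gaussCurv x u * D) • gaussMap x u := by
  have hnU : ∀ᶠ v in nhds u, v ∈ U := hU.mem_nhds hu
  have hdn : DifferentiableAt ℝ (gaussMap x) u :=
    ((gauss_smooth hU hx himm).contDiffAt (hU.mem_nhds hu)).differentiableAt (by simp)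
  have hdx : ∀ i, DifferentiableAt ℝ (pd i x) u := fun i =>
    ((pd_smooth hU hx i).contDiffAt (hU.mem_nhds hu)).differentiableAt (by simp)
  have hnn : ∀ v ∈ U, dot3 (gaussMap x v) (gaussMap x v) = 1 := by
    intro v hv
    have h := cross_pos himm hv
    have h2 := Real.sqrt_pos.2 h
    have h3 := Real.mul_self_sqrt h.le
    unfold gaussMap norm3
    rw [dot3_smul_left, dot3_smul_right]
    field_simp
    rw [sq]; exact h3.symm
  have hxn : ∀ i, ∀ v, dot3 (pd i x v) (gaussMap x v) = 0 := by
    intro i v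
    unfold gaussMap
    rw [dot3_smul_right]
    fin_cases i
    · simp [dot_cross_left]
    · simp [dot_cross_right]
  have han : ∀ i, dot3 (pd i (gaussMap x) u) (gaussMap x u) = 0 := by
    intro i
    have h1 := pds_dot hdn hdn i
    rw [pds_congr (g := fun _ => (1:ℝ)) (hnU.mono hnn), pds_const, dot3_comm _ (gaussMap x u)] at h1
    rw [dot3_comm] at h1 ⊢
    linarith
  have hb : ∀ i j, fformII x u i j = -dot3 (pd j x u) (pd i (gaussMap x) u) := by
    intro i j
    have h1 := pds_dot (hdx j) hdn i
    rw [pds_congr (g := fun _ => (0:ℝ)) (hnU.mono fun v _ => hxn j v), pds_const] at h1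
    change dot3 (pd i (pd j x) u) (gaussMap x u) = _
    linarith
  have hbs : fformII x u 0 1 = fformII x u 1 0 := by
    change dot3 (pd 0 (pd 1 x) u) (gaussMap x u) = dot3 (pd 1 (pd 0 x) u) (gaussMap x u)
    rw [pd_symm hU hx hu]
  have hN := Real.sqrt_pos.2 (cross_pos himm hu)
  have hc : crossProduct (pd 0 x u) (pd 1 x u) =
      norm3 (crossProduct (pd 0 x u) (pd 1 x u)) • gaussMap x u := by
    unfold gaussMap norm3
    rw [smul_smul, mul_inv_cancel₀ hN.ne', one_smul]
  have hI : (fformI x u).det ≠ 0 := by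
    have h := cross_pos himm hu
    rw [lagrange] at h
    rw [Matrix.det_fin_two]
    exact h.ne'
  have hφ := matH (fformI x u) (fformII x u) hI (hpar u hu)
  have hdet := hpar u hu
  rw [hbs] at hφ
  rw [Matrix.det_fin_two] at hφ hdet
  rw [hb, hb] at hbs
  simp only [hb] at hφ hdet
  obtain ⟨D, hD⟩ := ptwise (pd 0 x u) (pd 1 x u) (gaussMap x u) (pd 0 (gaussMap x) u)
    (pd 1 (gaussMap x) u) _ (2 * meanCurv x u / gaussCurv x u) hN hc (hnn u hu) (han 0) (han 1)
    (by linarith)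
    (by intro h; apply hdet; linear_combination h)
    (by
      have h1 : fformI x u 0 0 = dot3 (pd 0 x u) (pd 0 x u) := rfl
      have h2 : fformI x u 0 1 = dot3 (pd 0 x u) (pd 1 x u) := rfl
      have h3 : fformI x u 1 0 = dot3 (pd 0 x u) (pd 1 x u) := dot3_comm _ _
      have h4 : fformI x u 1 1 = dot3 (pd 1 x u) (pd 1 x u) := rfl
      rw [h1, h2, h3, h4] at hφ
      unfold meanCurv gaussCurv
      rw [Matrix.det_fin_two (fformII x u)]
      simp only [hb]
      linear_combination hφ)
  refine ⟨D, ?_⟩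
  rw [Matrix.det_fin_two]
  exact hD

/-- `Δ^{III} x = ∇^{III}(2H/K, n) − (2H/K) n` on `U`. -/
theorem stmt4 (U : Set Param) (x : Param → Vec3)
    (hU : IsOpen U) (hUconn : IsConnected U)
    (hx : ContDiffOn ℝ (⊤ : ℕ∞) x U) (himm : Immersed x U)
    (hpar : ∀ u ∈ U, (fformII x u).det ≠ 0) :
    ∀ u ∈ U,
      beltrami2 (fformIII x) x u =
        beltrami1 (fformIII x) (fun v => 2 * meanCurv x v / gaussCurv x v) (gaussMap x) u
          - (2 * meanCurv x u / gaussCurv x u) • gaussMap x u := by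

  intro u hu
  have hUn := hU.mem_nhds hu
  have hnU : ∀ᶠ v in nhds u, v ∈ U := hUn
  have hns := gauss_smooth hU hx himm
  have dif : ∀ {f : Param → Vec3}, ContDiffOn ℝ (⊤ : ℕ∞) f U → DifferentiableAt ℝ f u :=
    fun h => (h.contDiffAt hUn).differentiableAt (by simp)
  have difs : ∀ {f : Param → ℝ}, ContDiffOn ℝ (⊤ : ℕ∞) f U → DifferentiableAt ℝ f u :=
    fun h => (h.contDiffAt hUn).differentiableAt (by simp)
  obtain ⟨W, hW⟩ : ∃ W : Param → ℝ, W = fun v =>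
    dot3 (crossProduct (pd 0 (gaussMap x) v) (pd 1 (gaussMap x) v)) (gaussMap x v) := ⟨_, rfl⟩
  have hWs : ContDiffOn ℝ (⊤ : ℕ∞) W U := by
    rw [hW]
    exact dot_smooth (cross_smooth (pd_smooth hU hns 0) (pd_smooth hU hns 1)) hns
  obtain ⟨φ, hφdef⟩ : ∃ φ : Param → ℝ, φ = fun v => 2 * meanCurv x v / gaussCurv x v := ⟨_, rfl⟩
  have F : ∀ v ∈ U, _ := fun v hv => facts hU hx himm hpar hv
  have hφv : ∀ v, 2 * meanCurv x v / gaussCurv x v = φ v := fun v => by rw [hφdef]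
  have hWv : ∀ v, dot3 (crossProduct (pd 0 (gaussMap x) v) (pd 1 (gaussMap x) v)) (gaussMap x v)
    = W v := fun v => by rw [hW]
  simp only [hφv, hWv, exists_eq_left] at F
  simp only [hφv]
  have hW0 : ∀ v ∈ U, W v ≠ 0 := fun v hv => (F v hv).1
  have hnn : ∀ v ∈ U, dot3 (gaussMap x v) (gaussMap x v) = 1 := by
    intro v hv
    obtain ⟨h0, -, -, -, -, -, h6, -⟩ := F v hv
    have h := hWv v
    rw [h6, dot3_smul_left] at h
    exact mul_left_cancel₀ h0 (by rw [h, mul_one])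
  have hdφ : DifferentiableAt ℝ φ u := by
    have h : ContDiffOn ℝ (⊤ : ℕ∞) (fun v => dot3 (crossProduct (pd 1 x v) (pd 0 (gaussMap x) v)
        + crossProduct (pd 1 (gaussMap x) v) (pd 0 x v)) (gaussMap x v) / W v) U :=
      (dot_smooth ((cross_smooth (pd_smooth hU hx 1) (pd_smooth hU hns 0)).add
        (cross_smooth (pd_smooth hU hns 1) (pd_smooth hU hx 0))) hns).div hWs hW0
    refine (difs h).congr_of_eventuallyEq (hnU.mono fun v hv => ?_)
    obtain ⟨h0, -, -, -, -, -, -, h7⟩ := F v hv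
    simp only [h7, dot3_smul_left, hnn v hv]
    field_simp
  obtain ⟨σ, hσ, hσW⟩ : ∃ σ : ℝ, σ * σ = 1 ∧ ∀ᶠ v in nhds u, |W v| = σ * W v := by
    have hcont := (difs hWs).continuousAt
    rcases lt_or_gt_of_ne (hW0 u hu) with h | h
    · refine ⟨-1, by norm_num, ?_⟩
      filter_upwards [hcont.eventually_lt continuousAt_const h] with v hv
      rw [abs_of_neg hv]; ring
    · refine ⟨1, by norm_num, ?_⟩
      filter_upwards [continuousAt_const.eventually_lt hcont h] with v hv
      rw [abs_of_pos hv]; ring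
  have hsq : ∀ v ∈ U, |W v| = σ * W v → Real.sqrt |(fformIII x v).det| = σ * W v := by
    intro v hv h
    rw [(F v hv).2.1, abs_of_nonneg (sq_nonneg _), Real.sqrt_sq_eq_abs, h]
  have hinv : ∀ v ∈ U, ∀ i j, (fformIII x v)⁻¹ i j
      = (W v)⁻¹ * ((fformIII x v).adjugate i j / W v) := by
    intro v hv i j
    rw [Matrix.inv_def, Ring.inverse_eq_inv', (F v hv).2.1]
    have := hW0 v hv
    simp only [Matrix.smul_apply, smul_eq_mul]
    field_simp
  have hadj : ∀ v, (fformIII x v).adjugate 0 0 = fformIII x v 1 1 ∧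
      (fformIII x v).adjugate 0 1 = -fformIII x v 0 1 ∧
      (fformIII x v).adjugate 1 0 = -fformIII x v 1 0 ∧
      (fformIII x v).adjugate 1 1 = fformIII x v 0 0 := by
    intro v; rw [Matrix.adjugate_fin_two]; simp
  have hes : ∀ i j, ContDiffOn ℝ (⊤ : ℕ∞) (fun v => fformIII x v i j) U := fun i j =>
    dot_smooth (pd_smooth hU hns i) (pd_smooth hU hns j)
  have hads : ∀ i j, ContDiffOn ℝ (⊤ : ℕ∞) (fun v => (fformIII x v).adjugate i j) U := by
    intro i j
    fin_cases i <;> fin_cases j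
    · simpa [hadj] using hes 1 1
    · simpa [hadj] using (hes 0 1).neg
    · simpa [hadj] using (hes 1 0).neg
    · simpa [hadj] using hes 0 0
  have hTs : ∀ i j, ContDiffOn ℝ (⊤ : ℕ∞)
      (fun v => (σ * ((fformIII x v).adjugate i j / W v)) • pd j x v) U := fun i j =>
    (contDiffOn_const.mul ((hads i j).div hWs hW0)).smul (pd_smooth hU hx j)
  have hT : ∀ i j, pd i (fun v => (Real.sqrt |(fformIII x v).det| * (fformIII x v)⁻¹ i j) • pd j x v) u
      = pd i (fun v => (σ * ((fformIII x v).adjugate i j / W v)) • pd j x v) u := by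
    intro i j
    refine pd_congr ?_ i
    filter_upwards [hnU, hσW] with v hv h
    rw [hsq v hv h, hinv v hv]
    have := hW0 v hv
    congr 1
    field_simp
  have dn := dif hns
  have dn' := fun i => dif (pd_smooth hU hns i)
  have dx' := fun i => dif (pd_smooth hU hx i)
  have hS0 : ∑ j, pd 0 (fun v => (Real.sqrt |(fformIII x v).det| * (fformIII x v)⁻¹ 0 j) • pd j x v) u
      = pd 0 (fun v => (-σ) • (φ v • crossProduct (pd 1 (gaussMap x) v) (gaussMap x v)
          + crossProduct (pd 1 x v) (gaussMap x v))) u := by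
    rw [Fin.sum_univ_two, hT, hT, ← pd_add' (dif (hTs 0 0)) (dif (hTs 0 1))]
    refine pd_congr (hnU.mono fun v hv => ?_) 0
    obtain ⟨-, -, h3, -⟩ := F v hv
    obtain ⟨a1, a2, a3, a4⟩ := hadj v
    simp only [a1, a2]
    rw [neg_smul, ← smul_neg, ← h3]
    module
  have hS1 : ∑ j, pd 1 (fun v => (Real.sqrt |(fformIII x v).det| * (fformIII x v)⁻¹ 1 j) • pd j x v) u
      = pd 1 (fun v => (-σ) • (φ v • crossProduct (gaussMap x v) (pd 0 (gaussMap x) v)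
          + crossProduct (gaussMap x v) (pd 0 x v))) u := by
    rw [Fin.sum_univ_two, hT, hT, ← pd_add' (dif (hTs 1 0)) (dif (hTs 1 1))]
    refine pd_congr (hnU.mono fun v hv => ?_) 1
    obtain ⟨-, -, -, h4, -⟩ := F v hv
    obtain ⟨a1, a2, a3, a4⟩ := hadj v
    simp only [a3, a4]
    rw [neg_smul, ← smul_neg, ← h4]
    module
  have hc1 := cross_diff (dn' 1) dn
  have hc2 := cross_diff (dx' 1) dn
  have hc3 := cross_diff dn (dn' 0)
  have hc4 := cross_diff dn (dx' 0)
  unfold beltrami2 beltrami1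
  rw [Fin.sum_univ_two, hS0, hS1, pd_csmul' _ ((hdφ.fun_smul hc1).fun_add hc2),
    pd_csmul' _ ((hdφ.fun_smul hc3).fun_add hc4), pd_add' (hdφ.fun_smul hc1) hc2,
    pd_add' (hdφ.fun_smul hc3) hc4, pd_smul' hdφ hc1, pd_smul' hdφ hc3,
    pd_cross (dn' 1) dn, pd_cross (dx' 1) dn, pd_cross dn (dn' 0), pd_cross dn (dx' 0),
    pd_symm hU hns hu 1 0, pd_symm hU hx hu 1 0, hsq u hu hσW.self_of_nhds]
  obtain ⟨h0, -, -, -, h5, h5', h6, h7⟩ := F u hu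
  obtain ⟨a1, a2, a3, a4⟩ := hadj u
  simp only [Fin.sum_univ_two, hinv u hu, a1, a2, a3, a4]
  have e1 : crossProduct (gaussMap x u) (pd 0 (pd 1 (gaussMap x)) u) =
      -crossProduct (pd 0 (pd 1 (gaussMap x)) u) (gaussMap x u) := by rw [cross_anticomm]
  have e2 : crossProduct (gaussMap x u) (pd 0 (pd 1 x) u) =
      -crossProduct (pd 0 (pd 1 x) u) (gaussMap x u) := by rw [cross_anticomm]
  have e3 : crossProduct (pd 1 (gaussMap x) u) (pd 0 (gaussMap x) u) = -(W u • gaussMap x u) := by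
    rw [← h6, cross_anticomm]
  have e4 : crossProduct (pd 1 (gaussMap x) u) (pd 0 x u) = (φ u * W u) • gaussMap x u
      - crossProduct (pd 1 x u) (pd 0 (gaussMap x) u) := by rw [← h7]; abel
  rw [e1, e2, e3, e4, h5, h5']
  have hσi : (σ * W u)⁻¹ = σ * (W u)⁻¹ := by
    rw [mul_inv, inv_eq_of_mul_eq_one_left hσ]
  have hcomb : ∀ A B : Vec3, -((σ * (W u)⁻¹) • ((-σ) • A + (-σ) • B)) = (W u)⁻¹ • (A + B) := by
    intro A B
    have h : (W u)⁻¹ • (A + B) = ((σ * σ) * (W u)⁻¹) • (A + B) := by rw [hσ, one_mul]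
    rw [h]
    module
  rw [hσi, hcomb]
  match_scalars
  all_goals field_simp
  all_goals ring
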